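/- Let d ≥ 4. A form F ∈ ℝ[x,y]_d realizes the maximal possible gap d - 2 between its real Waring rank and its complex Waring rank if and only if rk(F) = 2 and rk_ℝ(F) = d; equivalently, F has complex Waring rank two and splits into d distinct real linear factors. -/

import Mathlib

open MvPolynomial

noncomputable def lin (c : ℂ × ℂ) : MvPolynomial (Fin 2) ℂ :=
  C c.1 * X 0 + C c.2 * X 1

noncomputable def waringRank (d : ℕ) (F : MvPolynomial (Fin 2) ℂ) : ℕ :=
  sInf {r | ∃ (a : Fin r → ℂ) (c : Fin r → ℂ × ℂ), F = ∑ i, C (a i) * lin (c i) ^ d}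

noncomputable def rlin (c : ℝ × ℝ) : MvPolynomial (Fin 2) ℝ :=
  C c.1 * X 0 + C c.2 * X 1

noncomputable def realWaringRank (d : ℕ) (F : MvPolynomial (Fin 2) ℝ) : ℕ :=
  sInf {r | ∃ (a : Fin r → ℝ) (c : Fin r → ℝ × ℝ), F = ∑ i, C (a i) * rlin (c i) ^ d}

/-!
Over a field of characteristic zero, at most `d + 1` pairwise non-proportional linear forms have
linearly independent `d`-th powers: a derivation killing one of the powers lowers the degree of any
relation between them. Compare a complex presentation `F = a l ^ d + b k ^ d` of a real form with
its conjugate. As `d ≥ 3`, either both lines are real and `F` has real rank at most two, or they are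
conjugate and `F = p ^ d + q ^ d` for a non-real `p` with conjugate `q`.

In the conjugate case `F` has no real presentation with fewer than `d` terms, since together with
`p` and `q` it would be a relation between at most `d + 1` powers; and `F = ∏ (p - e q)` over the
roots of `e ^ d = -1` is a product of real lines up to a scalar, because `|e| = 1`. In the real case
`a l ^ d + b k ^ d` has at most two distinct real zeros, so it does not split.

Every real form of degree `d` has real rank at most `d`: pairing it with `(∂x + i∂y) ^ d` picks out
`d` equally spaced directions and one more such that, in the basis of the `d + 1` corresponding
powers, the last coefficient of the form is zero.
-/

section LinearForms

variable {R S : Type*} [CommRing R] [CommRing S]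

/-- The linear form `c.1 x + c.2 y`, depending linearly on its coefficient vector `c`;
`lin` and `rlin` are its instances over `ℂ` and `ℝ`. -/
noncomputable def linearForm : R × R →ₗ[R] MvPolynomial (Fin 2) R where
  toFun c := C c.1 * X 0 + C c.2 * X 1
  map_add' p q := by simp only [Prod.fst_add, Prod.snd_add, C_add]; ring
  map_smul' t p := by
    simp only [Prod.smul_fst, Prod.smul_snd, smul_eq_mul, C_mul, RingHom.id_apply, smul_eq_C_mul]
    ring

theorem linearForm_apply (c : R × R) : linearForm c = C c.1 * X 0 + C c.2 * X 1 := rfl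

theorem linearForm_eq_zero_iff {c : R × R} : linearForm c = 0 ↔ c = 0 := by
  refine ⟨fun h => Prod.ext ?_ ?_, fun h => by rw [h, map_zero]⟩
  · simpa [linearForm_apply] using congrArg (eval ![1, 0]) h
  · simpa [linearForm_apply] using congrArg (eval ![0, 1]) h

theorem linearForm_smul_pow (t : R) (c : R × R) (n : ℕ) :
    linearForm (t • c) ^ n = t ^ n • linearForm c ^ n := by
  rw [map_smul, smul_pow]

theorem map_linearForm (f : R →+* S) (c : R × R) :
    (linearForm c).map f = linearForm (Prod.map f f c) := by
  simp [linearForm_apply]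

theorem map_smul_linearForm_pow (f : R →+* S) (a : R) (c : R × R) (n : ℕ) :
    (a • linearForm c ^ n).map f = f a • linearForm (Prod.map f f c) ^ n := by
  rw [smul_eq_C_mul, map_mul, map_C, map_pow, map_linearForm, smul_eq_C_mul]

theorem isHomogeneous_linearForm_pow (c : R × R) (n : ℕ) : (linearForm c ^ n).IsHomogeneous n := by
  have h := ((isHomogeneous_C_mul_X c.1 (0 : Fin 2)).add (isHomogeneous_C_mul_X c.2 1)).pow n
  rwa [one_mul] at h

/-- The determinant of two coefficient vectors. It vanishes when the two linear forms are
proportional, and `wedge c q` is the value of the form `c` at its point `(q.2, -q.1)`. -/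
def wedge (p q : R × R) : R := p.1 * q.2 - p.2 * q.1

theorem wedge_self (p : R × R) : wedge p p = 0 := by
  rw [wedge]; ring

theorem neg_wedge (p q : R × R) : -wedge p q = wedge q p := by
  simp only [wedge]; ring

theorem wedge_smul_left (t : R) (p q : R × R) : wedge (t • p) q = t * wedge p q := by
  simp only [wedge, Prod.smul_fst, Prod.smul_snd, smul_eq_mul]; ring

theorem wedge_smul_right (t : R) (p q : R × R) : wedge p (t • q) = t * wedge p q := by
  simp only [wedge, Prod.smul_fst, Prod.smul_snd, smul_eq_mul]; ring

theorem wedge_wedge_wedge (l k p q : R × R) :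
    wedge (wedge l p, wedge k p) (wedge l q, wedge k q) = wedge l k * wedge p q := by
  simp only [wedge]; ring

theorem wedge_sub_smul_sub_smul (p q : R × R) (e f : R) :
    wedge (p - e • q) (p - f • q) = (e - f) * wedge p q := by
  simp only [wedge, Prod.fst_sub, Prod.snd_sub, Prod.smul_fst, Prod.smul_snd, smul_eq_mul]
  ring

theorem left_ne_zero_of_wedge_ne_zero {p q : R × R} (h : wedge p q ≠ 0) : p ≠ 0 := by
  rintro rfl
  simp [wedge] at h

theorem right_ne_zero_of_wedge_ne_zero {p q : R × R} (h : wedge p q ≠ 0) : q ≠ 0 :=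
  left_ne_zero_of_wedge_ne_zero (p := q) (q := p) (by rwa [← neg_wedge, neg_ne_zero])

theorem wedge_eq_zero_trans [IsDomain R] {p q r : R × R} (hq : q ≠ 0) (hpq : wedge p q = 0)
    (hqr : wedge q r = 0) : wedge p r = 0 := by
  contrapose! hq
  simp only [wedge] at *
  refine Prod.ext ((mul_eq_zero.1 ?_).resolve_left hq) ((mul_eq_zero.1 ?_).resolve_left hq)
  · linear_combination p.1 * hqr + r.1 * hpq
  · linear_combination p.2 * hqr + r.2 * hpq

theorem exists_smul_eq_of_wedge_eq_zero {K : Type*} [Field K] {p q : K × K} (hp : p ≠ 0)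
    (h : wedge p q = 0) : ∃ s : K, q = s • p := by
  by_cases hp1 : p.1 = 0
  · have hp2 : p.2 ≠ 0 := fun hp2 => hp (Prod.ext hp1 hp2)
    have hq1 : q.1 = 0 := by simpa [wedge, hp1, hp2] using h
    exact ⟨q.2 / p.2, Prod.ext (by simp [hp1, hq1]) (by simp [hp2])⟩
  · refine ⟨q.1 / p.1, Prod.ext (by simp [hp1]) ?_⟩
    simp only [Prod.smul_snd, smul_eq_mul]
    rw [wedge] at h
    field_simp
    linear_combination h

theorem eval_linearForm (c q : R × R) : eval ![q.2, -q.1] (linearForm c) = wedge c q := by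
  simp only [linearForm_apply, map_add, map_mul, eval_C, eval_X, Matrix.cons_val_zero,
    Matrix.cons_val_one, wedge]
  ring

/-- Differentiation along `(k.2, -k.1)`; it kills the powers of the form `linearForm k`. -/
noncomputable def wedgeDeriv (k : R × R) :
    Derivation R (MvPolynomial (Fin 2) R) (MvPolynomial (Fin 2) R) :=
  k.2 • pderiv 0 - k.1 • pderiv 1

theorem wedgeDeriv_linearForm_pow (k l : R × R) (n : ℕ) :
    wedgeDeriv k (linearForm l ^ (n + 1)) = ((n + 1) * wedge l k) • linearForm l ^ n := by
  have hl : wedgeDeriv k (linearForm l) = C (wedge l k) := by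
    simp only [wedgeDeriv, linearForm_apply, wedge, pderiv_X, smul_eq_C_mul, C_sub, C_mul,
      Derivation.coe_sub, Derivation.coe_smul, Pi.sub_apply, Pi.smul_apply, map_add,
      Derivation.leibniz, derivation_C, smul_eq_mul, Pi.single_eq_same,
      Pi.single_eq_of_ne one_ne_zero, Pi.single_eq_of_ne zero_ne_one]
    ring
  rw [Derivation.leibniz_pow, hl, Nat.add_sub_cancel, ← Nat.cast_smul_eq_nsmul R]
  simp only [smul_eq_C_mul, smul_eq_mul, C_mul]
  push_cast
  ring

theorem exists_wedge_eq_zero_of_smul_pow_eq_sum [IsDomain R] [CharZero R] {ι : Type*}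
    {s : Finset ι} {n : ℕ} (hs : s.card ≤ n) {l : R × R} (hl : l ≠ 0) {b : R} (hb : b ≠ 0)
    {a : ι → R} {c : ι → R × R}
    (h : b • linearForm l ^ n = ∑ i ∈ s, a i • linearForm (c i) ^ n) :
    ∃ i ∈ s, c i ≠ 0 ∧ wedge l (c i) = 0 := by
  classical
  induction s using Finset.induction_on generalizing n b a with
  | empty =>
    rw [Finset.sum_empty] at h
    exact absurd h (smul_ne_zero hb (pow_ne_zero n (linearForm_eq_zero_iff.not.2 hl)))
  | insert i s his ih =>
    rw [Finset.card_insert_of_notMem his] at hs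
    obtain ⟨m, rfl⟩ := Nat.exists_eq_add_one_of_ne_zero (by omega : n ≠ 0)
    rw [Finset.sum_insert his] at h
    suffices wedge l (c i) = 0 ∧ c i ≠ 0 ∨ ∃ j ∈ s, c j ≠ 0 ∧ wedge l (c j) = 0 by
      simpa only [Finset.exists_mem_insert, and_comm] using this
    by_cases hi : c i = 0
    · refine Or.inr (ih (n := m + 1) (a := a) (by omega) hb ?_)
      rw [h, hi, map_zero, zero_pow m.succ_ne_zero, smul_zero, zero_add]
    by_cases hli : wedge l (c i) = 0
    · exact Or.inl ⟨hli, hi⟩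
    have hderiv := congrArg (wedgeDeriv (c i)) h
    simp only [map_add, map_sum, Derivation.map_smul, wedgeDeriv_linearForm_pow, wedge_self,
      mul_zero, zero_smul, smul_zero, zero_add, smul_smul] at hderiv
    have hbl : b * ((m + 1) * wedge l (c i)) ≠ 0 :=
      mul_ne_zero hb (mul_ne_zero m.cast_add_one_ne_zero hli)
    exact Or.inr (ih (n := m) (by omega) hbl hderiv)

theorem linearIndependent_linearForm_pow [IsDomain R] [CharZero R] {ι : Type*} [Fintype ι] {n : ℕ}
    (hι : Fintype.card ι ≤ n + 1) {c : ι → R × R} (hc0 : ∀ i, c i ≠ 0)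
    (hc : Pairwise fun i j => wedge (c i) (c j) ≠ 0) :
    LinearIndependent R fun i => linearForm (c i) ^ n := by
  classical
  refine Fintype.linearIndependent_iff.2 fun w hw i => ?_
  by_contra hwi
  have hcard : (Finset.univ.erase i).card ≤ n := by
    rw [Finset.card_erase_of_mem (Finset.mem_univ i), Finset.card_univ]; omega
  have hsum : w i • linearForm (c i) ^ n =
      ∑ j ∈ Finset.univ.erase i, -w j • linearForm (c j) ^ n := by
    simp only [neg_smul, Finset.sum_neg_distrib]
    rw [Finset.sum_erase_eq_sub (Finset.mem_univ i), hw, zero_sub, neg_neg]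
  obtain ⟨j, hj, -, hij⟩ := exists_wedge_eq_zero_of_smul_pow_eq_sum hcard (hc0 i) hwi hsum
  exact hc (Finset.ne_of_mem_erase hj).symm hij

theorem linearIndependent_pair_linearForm_pow [IsDomain R] [CharZero R] {n : ℕ} (hn : n ≠ 0)
    {l k : R × R} (hlk : wedge l k ≠ 0) :
    LinearIndependent R ![linearForm l ^ n, linearForm k ^ n] := by
  have hkl : wedge k l ≠ 0 := by rwa [← neg_wedge, neg_ne_zero]
  have hli := linearIndependent_linearForm_pow (n := n) (c := ![l, k])
    (by rw [Fintype.card_fin]; omega)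
    (Fin.forall_fin_two.2 ⟨left_ne_zero_of_wedge_ne_zero hlk, right_ne_zero_of_wedge_ne_zero hlk⟩)
    (fun i j hij => by fin_cases i <;> fin_cases j <;> first | exact absurd rfl hij | assumption)
  convert hli using 1
  exact List.ofFn_inj.1 rfl

theorem wedge_eq_zero_or_of_smul_pow_add_eq [IsDomain R] [CharZero R] {n : ℕ} (hn : 3 ≤ n)
    {a b a' b' : R} {l k l' k' : R × R} (ha : a ≠ 0) (hlk : wedge l k ≠ 0)
    (h : a • linearForm l ^ n + b • linearForm k ^ n =
      a' • linearForm l' ^ n + b' • linearForm k' ^ n) :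
    wedge l l' = 0 ∨ wedge l k' = 0 := by
  have hsum : a • linearForm l ^ n =
      ∑ i, ![-b, a', b'] i • linearForm (![k, l', k'] i) ^ n := by
    rw [Fin.sum_univ_three, eq_sub_of_add_eq h]
    simp only [Matrix.cons_val, neg_smul]
    abel
  obtain ⟨i, -, -, hi⟩ := exists_wedge_eq_zero_of_smul_pow_eq_sum
    (by simpa using hn) (left_ne_zero_of_wedge_ne_zero hlk) ha hsum
  fin_cases i
  exacts [absurd hi hlk, Or.inl hi, Or.inr hi]

end LinearForms

section PowerSums

variable {R S : Type*} [CommRing R] [CommRing S] {d r s : ℕ} {F : MvPolynomial (Fin 2) R}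

/-- `F` is a linear combination of `r` `d`-th powers of linear forms. Coefficients and forms may
vanish, so the property is monotone in `r`. -/
def IsPowerSum (d r : ℕ) (F : MvPolynomial (Fin 2) R) : Prop :=
  ∃ (a : Fin r → R) (c : Fin r → R × R), F = ∑ i, a i • linearForm (c i) ^ d

/-- The Waring rank over the coefficient ring, as a degree `d` form: the common generalization of
`waringRank` and `realWaringRank`. It has the junk value `0` if `F` is not a power sum. -/
noncomputable def powerRank (d : ℕ) (F : MvPolynomial (Fin 2) R) : ℕ :=
  sInf {r | IsPowerSum d r F}

theorem waringRank_eq_powerRank (d : ℕ) : waringRank d = powerRank d := by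
  funext F
  simp only [powerRank, IsPowerSum, smul_eq_C_mul]
  rfl

theorem realWaringRank_eq_powerRank (d : ℕ) : realWaringRank d = powerRank d := by
  funext F
  simp only [powerRank, IsPowerSum, smul_eq_C_mul]
  rfl

theorem isPowerSum_zero_iff : IsPowerSum d 0 F ↔ F = 0 := by
  simp [IsPowerSum]

theorem isPowerSum_one_iff : IsPowerSum d 1 F ↔ 
    ∃ (a : R) (l : R × R), F = a • linearForm l ^ d := by
  simp only [IsPowerSum, Fin.sum_univ_one]
  exact ⟨fun ⟨a, c, h⟩ => ⟨a 0, c 0, h⟩, fun ⟨a, l, h⟩ => ⟨fun _ => a, fun _ => l, h⟩⟩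

theorem IsPowerSum.mono (h : IsPowerSum d r F) (hrs : r ≤ s) : IsPowerSum d s F := by
  obtain ⟨a, c, rfl⟩ := h
  obtain ⟨k, rfl⟩ := Nat.exists_eq_add_of_le hrs
  exact ⟨Fin.append a 0, Fin.append c 0, by simp [Fin.sum_univ_add]⟩

theorem IsPowerSum.map (h : IsPowerSum d r F) (f : R →+* S) : IsPowerSum d r (F.map f) := by
  obtain ⟨a, c, rfl⟩ := h
  exact ⟨fun i => f (a i), fun i => Prod.map f f (c i), by
    simp only [map_sum, map_smul_linearForm_pow]⟩

theorem IsPowerSum.powerRank_le (h : IsPowerSum d r F) : powerRank d F ≤ r :=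
  Nat.sInf_le h

theorem IsPowerSum.isPowerSum_powerRank (h : IsPowerSum d r F) : IsPowerSum d (powerRank d F) F :=
  Nat.sInf_mem (s := {r | IsPowerSum d r F}) ⟨r, h⟩

theorem IsPowerSum.one_or_exists_wedge_ne_zero {K : Type*} [Field K]
    {F : MvPolynomial (Fin 2) K} (hd : d ≠ 0) (h : IsPowerSum d 2 F) :
    IsPowerSum d 1 F ∨ ∃ (a b : K) (l k : K × K), a ≠ 0 ∧ b ≠ 0 ∧ wedge l k ≠ 0 ∧
      F = a • linearForm l ^ d + b • linearForm k ^ d := by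
  obtain ⟨a, c, h⟩ := h
  rw [Fin.sum_univ_two] at h
  by_cases hne : a 0 ≠ 0 ∧ a 1 ≠ 0 ∧ wedge (c 0) (c 1) ≠ 0
  · exact Or.inr ⟨a 0, a 1, c 0, c 1, hne.1, hne.2.1, hne.2.2, h⟩
  refine Or.inl (isPowerSum_one_iff.2 ?_)
  by_cases ha0 : a 0 = 0
  · exact ⟨a 1, c 1, by rw [h, ha0, zero_smul, zero_add]⟩
  by_cases ha1 : a 1 = 0
  · exact ⟨a 0, c 0, by rw [h, ha1, zero_smul, add_zero]⟩
  by_cases hc0 : c 0 = 0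
  · exact ⟨a 1, c 1, by rw [h, hc0, map_zero, zero_pow hd, smul_zero, zero_add]⟩
  have hc : wedge (c 0) (c 1) = 0 := by
    by_contra hc
    exact hne ⟨ha0, ha1, hc⟩
  obtain ⟨t, ht⟩ := exists_smul_eq_of_wedge_eq_zero hc0 hc
  exact ⟨a 0 + a 1 * t ^ d, c 0, by rw [h, ht, linearForm_smul_pow, smul_smul, add_smul]⟩

end PowerSums

section RealPoints

/-- A real coefficient vector viewed as a complex one. -/
def complexify (c : ℝ × ℝ) : ℂ × ℂ := (c.1, c.2)

theorem map_ofReal_smul_linearForm_pow (a : ℝ) (c : ℝ × ℝ) (n : ℕ) :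
    (a • linearForm c ^ n).map (algebraMap ℝ ℂ) = (a : ℂ) • linearForm (complexify c) ^ n :=
  map_smul_linearForm_pow _ a c n

theorem map_ofReal_injective {σ : Type*} :
    Function.Injective (MvPolynomial.map (σ := σ) (algebraMap ℝ ℂ)) :=
  map_injective _ (algebraMap ℝ ℂ).injective

theorem star_complexify (c : ℝ × ℝ) : star (complexify c) = complexify c :=
  Prod.ext (Complex.conj_ofReal _) (Complex.conj_ofReal _)

theorem wedge_star_star (p q : ℂ × ℂ) : wedge (star p) (star q) = star (wedge p q) := by
  simp [wedge]

theorem wedge_complexify (p q : ℝ × ℝ) :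
    wedge (complexify p) (complexify q) = (wedge p q : ℝ) := by
  simp [wedge, complexify]

theorem exists_eq_smul_complexify {l : ℂ × ℂ} (hl : wedge l (star l) = 0) :
    ∃ (t : ℂ) (m : ℝ × ℝ), l = t • complexify m := by
  by_cases h1 : l.1 = 0
  · exact ⟨l.2, (0, 1), Prod.ext (by simp [complexify, h1]) (by simp [complexify])⟩
  · have hreal : star (l.2 / l.1) = l.2 / l.1 := by
      have h1' : star l.1 ≠ 0 := star_ne_zero.2 h1
      rw [star_div₀, div_eq_div_iff h1' h1]
      simp only [wedge, Prod.fst_star, Prod.snd_star] at hl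
      linear_combination hl
    obtain ⟨r, hr⟩ := Complex.conj_eq_iff_real.1 hreal
    refine ⟨l.1, (1, r), Prod.ext (by simp [complexify]) ?_⟩
    simp only [complexify, Prod.smul_snd, smul_eq_mul, ← hr]
    field_simp

theorem eq_sum_re_smul_of_map_eq_sum {σ ι : Type*} {s : Finset ι} {F : MvPolynomial σ ℝ}
    {a : ι → ℂ} {G : ι → MvPolynomial σ ℝ}
    (h : F.map (algebraMap ℝ ℂ) = ∑ i ∈ s, a i • (G i).map (algebraMap ℝ ℂ)) :
    F = ∑ i ∈ s, (a i).re • G i := by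
  ext m
  have hm := congrArg (fun P => (coeff m P).re) h
  simpa [coeff_sum, coeff_map] using hm

theorem eq_re_smul_of_map_eq_smul {σ : Type*} {F G : MvPolynomial σ ℝ} {a : ℂ}
    (h : F.map (algebraMap ℝ ℂ) = a • G.map (algebraMap ℝ ℂ)) : F = a.re • G := by
  simpa using eq_sum_re_smul_of_map_eq_sum (s := {()}) (a := fun _ => a) (G := fun _ => G)
    (by simpa using h)

variable {d r : ℕ} {F : MvPolynomial (Fin 2) ℝ}

theorem isPowerSum_of_map_eq_sum {a : Fin r → ℂ} {c : Fin r → ℂ × ℂ}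
    (hc : ∀ i, wedge (c i) (star (c i)) = 0)
    (h : F.map (algebraMap ℝ ℂ) = ∑ i, a i • linearForm (c i) ^ d) : IsPowerSum d r F := by
  choose t m hm using fun i => exists_eq_smul_complexify (hc i)
  refine ⟨fun i => (a i * t i ^ d).re, m, eq_sum_re_smul_of_map_eq_sum (h.trans ?_)⟩
  refine Finset.sum_congr rfl fun i _ => ?_
  rw [hm i, linearForm_smul_pow, smul_smul, map_pow, map_linearForm]
  rfl

theorem sum_star_smul_eq_of_map_eq_sum {a : Fin r → ℂ} {c : Fin r → ℂ × ℂ}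
    (h : F.map (algebraMap ℝ ℂ) = ∑ i, a i • linearForm (c i) ^ d) :
    F.map (algebraMap ℝ ℂ) = ∑ i, star (a i) • linearForm (star (c i)) ^ d := by
  have hconj : (starRingEnd ℂ).comp (algebraMap ℝ ℂ) = algebraMap ℝ ℂ :=
    RingHom.ext Complex.conj_ofReal
  have hF := congrArg (MvPolynomial.map (starRingEnd ℂ)) h
  simp only [map_map, hconj, map_sum, map_smul_linearForm_pow] at hF
  exact hF

theorem add_star_smul_eq_of_map_eq_add {a b : ℂ} {l k : ℂ × ℂ}
    (h : F.map (algebraMap ℝ ℂ) = a • linearForm l ^ d + b • linearForm k ^ d) :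
    F.map (algebraMap ℝ ℂ) =
      star a • linearForm (star l) ^ d + star b • linearForm (star k) ^ d := by
  have hsum : F.map (algebraMap ℝ ℂ) = ∑ i, ![a, b] i • linearForm (![l, k] i) ^ d := by
    simpa [Fin.sum_univ_two] using h
  simpa [Fin.sum_univ_two] using sum_star_smul_eq_of_map_eq_sum hsum

theorem IsPowerSum.of_map_of_one (hd : d ≠ 0) (h : IsPowerSum d 1 (F.map (algebraMap ℝ ℂ))) :
    IsPowerSum d 1 F := by
  obtain ⟨a, c, h⟩ := h
  by_cases hc : ∀ i, wedge (c i) (star (c i)) = 0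
  · exact isPowerSum_of_map_eq_sum hc h
  rw [Fin.forall_fin_one] at hc
  suffices a 0 = 0 by
    have hF : F = 0 := map_ofReal_injective (by simpa [this] using h)
    exact (isPowerSum_zero_iff.2 hF).mono zero_le_one
  by_contra ha
  have hconj := sum_star_smul_eq_of_map_eq_sum h
  rw [h, Fin.sum_univ_one] at hconj
  obtain ⟨i, -, -, hi⟩ := exists_wedge_eq_zero_of_smul_pow_eq_sum
    (by simpa using Nat.one_le_iff_ne_zero.2 hd) (left_ne_zero_of_wedge_ne_zero hc) ha hconj
  rw [Fin.fin_one_eq_zero i] at hi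
  exact hc hi

theorem IsPowerSum.of_map_of_le_one (hd : d ≠ 0) (hr : r ≤ 1)
    (h : IsPowerSum d r (F.map (algebraMap ℝ ℂ))) : IsPowerSum d r F := by
  interval_cases r
  · rw [isPowerSum_zero_iff] at h ⊢
    exact map_ofReal_injective (by rw [h, map_zero])
  · exact h.of_map_of_one hd

/-- `F` is the sum of the `d`-th powers of a non-real (up to scaling) linear form and its
conjugate, i.e. twice the real part of such a power. -/
def IsConjugatePowerSum (d : ℕ) (F : MvPolynomial (Fin 2) ℝ) : Prop :=
  ∃ p : ℂ × ℂ, wedge p (star p) ≠ 0 ∧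
    F.map (algebraMap ℝ ℂ) = linearForm p ^ d + linearForm (star p) ^ d

theorem isConjugatePowerSum_of_map_eq (hd : d ≠ 0) {a b : ℂ} {l : ℂ × ℂ} (ha : a ≠ 0)
    (hl : wedge l (star l) ≠ 0)
    (h : F.map (algebraMap ℝ ℂ) = a • linearForm l ^ d + b • linearForm (star l) ^ d) :
    IsConjugatePowerSum d F := by
  have hconj := add_star_smul_eq_of_map_eq_add h
  rw [star_star, h, add_comm (star a • _)] at hconj
  obtain ⟨-, rfl⟩ := (linearIndependent_pair_linearForm_pow hd hl).eq_of_pair hconj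
  obtain ⟨β, rfl⟩ := IsAlgClosed.exists_pow_nat_eq a (Nat.pos_of_ne_zero hd)
  have hβ : β ≠ 0 := ne_zero_pow hd ha
  refine ⟨β • l, ?_, ?_⟩
  · rw [star_smul, wedge_smul_left, wedge_smul_right]
    exact mul_ne_zero hβ (mul_ne_zero (star_ne_zero.2 hβ) hl)
  · rw [star_smul, linearForm_smul_pow, linearForm_smul_pow, ← star_pow, h]

theorem isConjugatePowerSum_of_wedge_star_eq_zero (hd : d ≠ 0) {a b : ℂ} {l k : ℂ × ℂ}
    (ha : a ≠ 0) (hlk : wedge l k ≠ 0) (hlk' : wedge l (star k) = 0)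
    (h : F.map (algebraMap ℝ ℂ) = a • linearForm l ^ d + b • linearForm k ^ d) :
    IsConjugatePowerSum d F := by
  have hstar : star l ≠ 0 := star_ne_zero.2 (left_ne_zero_of_wedge_ne_zero hlk)
  have hkl : wedge (star l) k = 0 := by
    rw [← star_star k, wedge_star_star, hlk', star_zero]
  obtain ⟨t, rfl⟩ := exists_smul_eq_of_wedge_eq_zero hstar hkl
  refine isConjugatePowerSum_of_map_eq hd (l := l) (b := b * t ^ d) ha ?_ ?_
  · exact right_ne_zero_of_mul (by rwa [wedge_smul_right] at hlk)
  · rw [h, linearForm_smul_pow, smul_smul]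

theorem isPowerSum_two_or_isConjugatePowerSum (hd : 3 ≤ d)
    (h : IsPowerSum d 2 (F.map (algebraMap ℝ ℂ))) :
    IsPowerSum d 2 F ∨ IsConjugatePowerSum d F := by
  have hd0 : d ≠ 0 := by omega
  obtain h1 | ⟨a, b, l, k, ha, hb, hlk, h⟩ := h.one_or_exists_wedge_ne_zero hd0
  · exact Or.inl ((h1.of_map_of_one hd0).mono one_le_two)
  have hkl : wedge k l ≠ 0 := by rwa [← neg_wedge, neg_ne_zero]
  have hconj := h.symm.trans (add_star_smul_eq_of_map_eq_add h)
  obtain hll | hlk' := wedge_eq_zero_or_of_smul_pow_add_eq hd ha hlk hconj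
  swap
  · exact Or.inr (isConjugatePowerSum_of_wedge_star_eq_zero hd0 ha hlk hlk' h)
  obtain hkl' | hkk := wedge_eq_zero_or_of_smul_pow_add_eq hd hb hkl
    ((add_comm _ _).trans hconj)
  · rw [add_comm] at h
    exact Or.inr (isConjugatePowerSum_of_wedge_star_eq_zero hd0 hb hkl hkl' h)
  · refine Or.inl (isPowerSum_of_map_eq_sum (a := ![a, b]) (c := ![l, k]) ?_ ?_)
    · exact Fin.forall_fin_two.2 ⟨hll, hkk⟩
    · simpa [Fin.sum_univ_two] using h

theorem IsConjugatePowerSum.le_of_isPowerSum (hF : IsConjugatePowerSum d F)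
    (h : IsPowerSum d r F) : d ≤ r := by
  obtain ⟨p, hp, hF⟩ := hF
  obtain ⟨a, c, rfl⟩ := h
  by_contra! hr
  have hsum : (1 : ℂ) • linearForm p ^ d = ∑ i : Fin (r + 1),
      (Fin.cons (-1) (fun i => (a i : ℂ)) : Fin (r + 1) → ℂ) i •
        linearForm ((Fin.cons (star p) fun i => complexify (c i) : Fin (r + 1) → ℂ × ℂ) i) ^ d := by
    rw [Fin.sum_univ_succ, one_smul, eq_sub_of_add_eq hF.symm]
    simp only [map_sum, Fin.cons_zero, Fin.cons_succ, map_ofReal_smul_linearForm_pow, neg_smul,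
      one_smul]
    abel
  obtain ⟨i, -, hi0, hi⟩ := exists_wedge_eq_zero_of_smul_pow_eq_sum
    (by simpa using hr) (left_ne_zero_of_wedge_ne_zero hp) one_ne_zero hsum
  cases i using Fin.cases with
  | zero => exact hp hi
  | succ i =>
    rw [Fin.cons_succ] at hi0 hi
    have hi' : wedge (star p) (complexify (c i)) = 0 := by
      rw [← star_complexify, wedge_star_star, hi, star_zero]
    exact hp (wedge_eq_zero_trans hi0 hi (by rw [← neg_wedge, hi', neg_zero]))

theorem IsConjugatePowerSum.ne_zero (hd : d ≠ 0) (hF : IsConjugatePowerSum d F) : F ≠ 0 :=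
  fun h => hd (Nat.le_zero.1 (hF.le_of_isPowerSum (isPowerSum_zero_iff.2 h)))

end RealPoints

section Splitting

variable {R : Type*} [CommRing R] {d : ℕ} {F : MvPolynomial (Fin 2) R}

/-- `F` is a product of `d` pairwise non-proportional linear forms. -/
def SplitsDistinct (d : ℕ) (F : MvPolynomial (Fin 2) R) : Prop :=
  ∃ L : Fin d → R × R, F = ∏ i, linearForm (L i) ∧ Pairwise fun i j => wedge (L i) (L j) ≠ 0

theorem SplitsDistinct.smul [IsDomain R] (hd : d ≠ 0) (hF : SplitsDistinct d F) {t : R}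
    (ht : t ≠ 0) : SplitsDistinct d (t • F) := by
  obtain ⟨L, rfl, hL⟩ := hF
  let w : Fin d → R := Pi.mulSingle ⟨0, Nat.pos_of_ne_zero hd⟩ t
  have hw : ∏ i, w i = t := by
    rw [Finset.prod_pi_mulSingle', if_pos (Finset.mem_univ _)]
  refine ⟨fun i => w i • L i, ?_, fun i j hij => ?_⟩
  · simp only [map_smul, Finset.prod_smul, hw]
  · have hw0 : ∀ i, w i ≠ 0 := fun i => Finset.prod_ne_zero_iff.1 (hw ▸ ht) i (Finset.mem_univ i)
    simp only [wedge_smul_left, wedge_smul_right]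
    exact mul_ne_zero (hw0 j) (mul_ne_zero (hw0 i) (hL hij))

theorem SplitsDistinct.ne_zero [IsDomain R] (hd : 2 ≤ d) (hF : SplitsDistinct d F) : F ≠ 0 := by
  obtain ⟨L, rfl, hL⟩ := hF
  have : Nontrivial (Fin d) := Fin.nontrivial_iff_two_le.2 hd
  refine Finset.prod_ne_zero_iff.2 fun i _ => linearForm_eq_zero_iff.not.2 ?_
  obtain ⟨j, hj⟩ := exists_ne i
  exact right_ne_zero_of_wedge_ne_zero (hL hj)

theorem eval_prod_linearForm_eq_zero {ι : Type*} [Fintype ι] (L : ι → R × R) (i : ι) :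
    eval ![(L i).2, -(L i).1] (∏ j, linearForm (L j)) = 0 := by
  rw [map_prod]
  exact Finset.prod_eq_zero (Finset.mem_univ i) (by rw [eval_linearForm, wedge_self])

theorem eval_smul_linearForm_pow (a : R) (c q : R × R) (n : ℕ) :
    eval ![q.2, -q.1] (a • linearForm c ^ n) = a * wedge c q ^ n := by
  rw [smul_eval, map_pow, eval_linearForm]

theorem IsPowerSum.one_not_splitsDistinct [IsDomain R] (hd : 2 ≤ d) (h : IsPowerSum d 1 F) :
    ¬ SplitsDistinct d F := by
  intro hF
  have hF0 := hF.ne_zero hd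
  obtain ⟨a, l, h⟩ := isPowerSum_one_iff.1 h
  obtain ⟨L, hprod, hL⟩ := hF
  have hl : l ≠ 0 := by
    rintro rfl
    exact hF0 (by rw [h, map_zero, zero_pow (by omega), smul_zero])
  have hroot : ∀ i, wedge l (L i) = 0 := fun i => by
    have ha : a ≠ 0 := by
      rintro rfl
      exact hF0 (by rw [h, zero_smul])
    have hi := eval_prod_linearForm_eq_zero L i
    rw [← hprod, h, eval_smul_linearForm_pow] at hi
    exact eq_zero_of_pow_eq_zero ((mul_eq_zero.1 hi).resolve_left ha)
  have hL01 : wedge (L ⟨0, by omega⟩) (L ⟨1, by omega⟩) ≠ 0 := hL (by simp)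
  refine hL01 (wedge_eq_zero_trans hl ?_ (hroot _))
  rw [← neg_wedge, hroot, neg_zero]

section Ordered

variable {K : Type*} [Field K] [LinearOrder K] [IsStrictOrderedRing K]
  {F : MvPolynomial (Fin 2) K}

theorem wedge_eq_zero_or_of_add_pow_eq_zero (hd : d ≠ 0) {a b : K} (ha : a ≠ 0) {u v : K × K}
    (hu : a * u.1 ^ d + b * u.2 ^ d = 0) (hv : a * v.1 ^ d + b * v.2 ^ d = 0) :
    wedge u v = 0 ∨ u.1 * v.2 + u.2 * v.1 = 0 := by
  have hpow : (u.1 * v.2) ^ d = (u.2 * v.1) ^ d := by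
    refine mul_left_cancel₀ ha ?_
    rw [mul_pow, mul_pow]
    linear_combination v.2 ^ d * hu - u.2 ^ d * hv
  have habs : |u.1 * v.2| = |u.2 * v.1| :=
    (pow_left_inj₀ (abs_nonneg _) (abs_nonneg _) hd).1 (by rw [← abs_pow, ← abs_pow, hpow])
  rwa [abs_eq_abs, ← sub_eq_zero, eq_neg_iff_add_eq_zero] at habs

theorem exists_ne_wedge_eq_zero_of_add_pow_eq_zero (hd : d ≠ 0) {a b : K} (ha : a ≠ 0)
    (hb : b ≠ 0) {u : Fin 3 → K × K} (hu : ∀ i, a * (u i).1 ^ d + b * (u i).2 ^ d = 0) :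
    ∃ i j, i ≠ j ∧ wedge (u i) (u j) = 0 := by
  by_contra! hw
  have hne : ∀ i, u i ≠ 0 := fun i =>
    left_ne_zero_of_wedge_ne_zero (hw i (i + 1) (by fin_cases i <;> decide))
  have h1 : ∀ i, (u i).1 ≠ 0 := fun i h => hne i <| Prod.ext h <| by
    simpa [h, hd, hb] using hu i
  have h2 : ∀ i, (u i).2 ≠ 0 := fun i h => hne i <| Prod.ext (by simpa [h, hd, ha] using hu i) h
  have hadd : ∀ i j, i ≠ j → (u i).1 * (u j).2 + (u i).2 * (u j).1 = 0 := fun i j hij =>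
    (wedge_eq_zero_or_of_add_pow_eq_zero hd ha (hu i) (hu j)).resolve_left (hw i j hij)
  have hprod : 2 * ((u 0).1 * ((u 1).2 * (u 2).2)) = 0 := by
    linear_combination (u 2).2 * hadd 0 1 (by decide) + (u 1).2 * hadd 0 2 (by decide) -
      (u 0).2 * hadd 1 2 (by decide)
  exact mul_ne_zero two_ne_zero (mul_ne_zero (h1 0) (mul_ne_zero (h2 1) (h2 2))) hprod

theorem IsPowerSum.two_not_splitsDistinct (hd : 3 ≤ d) (h : IsPowerSum d 2 F) :
    ¬ SplitsDistinct d F := by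
  have hd0 : d ≠ 0 := by omega
  obtain h1 | ⟨a, b, l, k, ha, hb, hlk, h⟩ := h.one_or_exists_wedge_ne_zero hd0
  · exact h1.one_not_splitsDistinct (by omega)
  rintro ⟨L, hprod, hL⟩
  let q : Fin 3 → K × K := fun i => L (Fin.castLE hd i)
  obtain ⟨i, j, hij, hw⟩ := exists_ne_wedge_eq_zero_of_add_pow_eq_zero hd0 ha hb
    (u := fun i => (wedge l (q i), wedge k (q i))) fun i => by
      rw [← eval_smul_linearForm_pow, ← eval_smul_linearForm_pow, ← map_add, ← h, hprod]
      exact eval_prod_linearForm_eq_zero L _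
  rw [wedge_wedge_wedge] at hw
  exact mul_ne_zero hlk (hL ((Fin.castLE_injective hd).ne hij)) hw

end Ordered

end Splitting

section ConjugatePowerSums

variable {d : ℕ}

theorem pow_add_pow_eq_prod_sub_smul {K A : Type*} [Field K] [CommRing A] [IsDomain A]
    [Algebra K A] {ζ ω : K} (hζ : IsPrimitiveRoot ζ d) (hd : d ≠ 0) (hω : ω ^ d = -1) (x y : A) :
    x ^ d + y ^ d = ∏ j : Fin d, (x - (ζ ^ (j : ℕ) * ω) • y) := by
  have : NeZero d := ⟨hd⟩
  have hpos : 0 < d := Nat.pos_of_ne_zero hd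
  have hζA : IsPrimitiveRoot (algebraMap K A ζ) d :=
    hζ.map_of_injective (algebraMap K A).injective
  have hωy : (ω • y) ^ d = -y ^ d := by rw [smul_pow, hω, neg_one_smul]
  rw [← sub_neg_eq_add, ← hωy, hζA.pow_sub_pow_eq_prod_sub_mul _ _ hpos]
  refine (Finset.prod_nbij (fun j : Fin d => algebraMap K A ζ ^ (j : ℕ)) ?_ ?_ ?_ ?_).symm
  · intro j _
    rw [Polynomial.mem_nthRootsFinset hpos, pow_right_comm, hζA.pow_eq_one, one_pow]
  · exact fun i _ j _ hij => Fin.ext (hζA.pow_inj i.2 j.2 hij)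
  · intro z hz
    obtain ⟨i, hi, rfl⟩ := hζA.eq_pow_of_pow_eq_one ((Polynomial.mem_nthRootsFinset hpos _).1 hz)
    exact ⟨⟨i, hi⟩, Finset.mem_coe.2 (Finset.mem_univ _), rfl⟩
  · intro j _
    simp only [Algebra.smul_def, map_mul, map_pow, mul_assoc]

theorem exists_sub_smul_star_eq_smul_complexify (p : ℂ × ℂ) {e : ℂ} (he : ‖e‖ = 1) :
    ∃ (t : ℂ) (m : ℝ × ℝ), p - e • star p = t • complexify m := by
  have hconj : star (p - e • star p) = -star e • (p - e • star p) := by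
    have hee : star e * e = 1 := by
      rw [Complex.star_def, Complex.conj_mul', he, Complex.ofReal_one, one_pow]
    rw [star_sub, star_smul, star_star, smul_sub, smul_smul, neg_mul, hee]
    module
  exact exists_eq_smul_complexify (by rw [hconj, wedge_smul_right, wedge_self, mul_zero])

theorem exists_prod_sub_smul_star_eq {ι : Type*} [Fintype ι] {p : ℂ × ℂ}
    (hp : wedge p (star p) ≠ 0) {e : ι → ℂ} (he : Function.Injective e) (he1 : ∀ j, ‖e j‖ = 1) :
    ∃ (t : ℂ) (m : ι → ℝ × ℝ),
      ∏ j, (linearForm p - e j • linearForm (star p)) =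
        t • (∏ j, linearForm (m j)).map (algebraMap ℝ ℂ) ∧
      Pairwise fun i j => wedge (m i) (m j) ≠ 0 := by
  choose t m hm using fun j => exists_sub_smul_star_eq_smul_complexify p (he1 j)
  refine ⟨∏ j, t j, m, ?_, fun i j hij hw => ?_⟩
  · simp only [← map_smul, ← map_sub, hm]
    simp only [map_smul, Finset.prod_smul, map_prod, map_linearForm]
    rfl
  · refine mul_ne_zero (sub_ne_zero.2 (he.ne hij)) hp ?_
    rw [← wedge_sub_smul_sub_smul, hm, hm, wedge_smul_left, wedge_smul_right, wedge_complexify, hw,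
      Complex.ofReal_zero, mul_zero, mul_zero]

theorem IsConjugatePowerSum.splitsDistinct {F : MvPolynomial (Fin 2) ℝ} (hd : d ≠ 0)
    (hF : IsConjugatePowerSum d F) : SplitsDistinct d F := by
  have hF0 := hF.ne_zero hd
  obtain ⟨p, hp, hF⟩ := hF
  obtain ⟨ζ, hζ⟩ : ∃ ζ : ℂ, IsPrimitiveRoot ζ d := ⟨_, Complex.isPrimitiveRoot_exp d hd⟩
  obtain ⟨ω, hω⟩ := IsAlgClosed.exists_pow_nat_eq (-1 : ℂ) (Nat.pos_of_ne_zero hd)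
  have hω1 : ‖ω‖ = 1 := by
    refine (pow_eq_one_iff_of_nonneg (norm_nonneg ω) hd).1 ?_
    rw [← norm_pow, hω, norm_neg, norm_one]
  have hω0 : ω ≠ 0 := norm_ne_zero_iff.1 (hω1 ▸ one_ne_zero)
  obtain ⟨t, m, hprod, hm⟩ := exists_prod_sub_smul_star_eq hp
    (e := fun j : Fin d => ζ ^ (j : ℕ) * ω)
    (fun i j hij => Fin.ext (hζ.pow_inj i.2 j.2 (mul_right_cancel₀ hω0 hij)))
    (fun j => by rw [norm_mul, norm_pow, hζ.norm'_eq_one hd, hω1, one_pow, one_mul])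
  have hFm : F = t.re • ∏ j, linearForm (m j) :=
    eq_re_smul_of_map_eq_smul <| by rw [hF, pow_add_pow_eq_prod_sub_smul hζ hd hω, hprod]
  rw [hFm]
  refine SplitsDistinct.smul hd ⟨m, rfl, hm⟩ fun ht => hF0 ?_
  rw [hFm, ht, zero_smul]

end ConjugatePowerSums

section HomogeneousForms

theorem finrank_homogeneousSubmodule {σ R : Type*} [Fintype σ] [CommRing R] [Nontrivial R]
    (n : ℕ) :
    Module.finrank R (homogeneousSubmodule σ R n) = (Fintype.card σ).multichoose n := by
  classical
  have hset : {m : σ →₀ ℕ | m.degree = n} =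
      (Finset.univ.finsuppAntidiag n : Finset (σ →₀ ℕ)) := by
    ext m
    simp [Finsupp.degree_eq_sum]
  rw [homogeneousSubmodule_eq_finsupp_supported, hset,
    (AddMonoidAlgebra.supportedEquivFinsupp _).finrank_eq, Module.finrank_finsupp_self,
    ← Nat.card_eq_fintype_card, Nat.card_coe_set_eq, Set.ncard_coe_finset,
    Finset.card_finsuppAntidiag_nat_eq_multichoose, Finset.card_univ]

theorem exists_eq_sum_smul_linearForm_pow {K ι : Type*} [Field K] [CharZero K] [Fintype ι] {d : ℕ}
    (hι : Fintype.card ι = d + 1) {c : ι → K × K} (hc0 : ∀ i, c i ≠ 0)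
    (hc : Pairwise fun i j => wedge (c i) (c j) ≠ 0) {F : MvPolynomial (Fin 2) K}
    (hF : F.IsHomogeneous d) : ∃ a : ι → K, F = ∑ i, a i • linearForm (c i) ^ d := by
  have hli := linearIndependent_linearForm_pow hι.le hc0 hc
  have hle : Submodule.span K (Set.range fun i => linearForm (c i) ^ d) ≤
      homogeneousSubmodule (Fin 2) K d :=
    Submodule.span_le.2 <| Set.range_subset_iff.2 fun i => isHomogeneous_linearForm_pow (c i) d
  have : Module.Finite K (homogeneousSubmodule (Fin 2) K d) :=
    Module.Finite.iff_fg.2 (homogeneousSubmodule_fg _ _ d)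
  have hspan := Submodule.eq_of_le_of_finrank_eq hle <| by
    rw [finrank_span_eq_card hli, hι, finrank_homogeneousSubmodule, Fintype.card_fin,
      Nat.multichoose_two]
  obtain ⟨a, ha⟩ := (Submodule.mem_span_range_iff_exists_fun K).1 (hspan.ge hF)
  exact ⟨a, ha.symm⟩

/-- Contraction of a form of degree `d` with the `d`-th power of the derivation `wedgeDeriv k`, as a
linear functional. -/
noncomputable def wedgeContraction {R : Type*} [CommRing R] (d : ℕ) (k : R × R) :
    MvPolynomial (Fin 2) R →ₗ[R] R :=
  lcoeff R 0 ∘ₗ (wedgeDeriv k : MvPolynomial (Fin 2) R →ₗ[R] MvPolynomial (Fin 2) R) ^ d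

theorem wedgeContraction_linearForm_pow {R : Type*} [CommRing R] (d : ℕ) (k l : R × R) :
    wedgeContraction d k (linearForm l ^ d) = d.factorial * wedge l k ^ d := by
  induction d with
  | zero => simp [wedgeContraction]
  | succ d ih =>
    have hstep : wedgeContraction (d + 1) k (linearForm l ^ (d + 1)) =
        wedgeContraction d k (((d + 1) * wedge l k) • linearForm l ^ d) := by
      rw [← wedgeDeriv_linearForm_pow]
      simp [wedgeContraction, pow_succ]
    rw [hstep, map_smul, ih, Nat.factorial_succ, smul_eq_mul]
    push_cast
    ring

/-- The unit vector at angle `θ`, as the coefficient vector of a real linear form. -/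
noncomputable def unitVec (θ : ℝ) : ℝ × ℝ := (Real.cos θ, Real.sin θ)

theorem wedge_unitVec (θ φ : ℝ) : wedge (unitVec θ) (unitVec φ) = Real.sin (φ - θ) := by
  rw [Real.sin_sub, wedge, unitVec, unitVec]
  ring

theorem unitVec_ne_zero (θ : ℝ) : unitVec θ ≠ 0 := fun h => by
  have hcs := Real.cos_sq_add_sin_sq θ
  rw [show Real.cos θ = 0 from congrArg Prod.fst h,
    show Real.sin θ = 0 from congrArg Prod.snd h] at hcs
  norm_num at hcs

theorem wedge_complexify_unitVec (θ : ℝ) :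
    wedge (complexify (unitVec θ)) (-Complex.I, 1) = Complex.exp (θ * Complex.I) := by
  rw [Complex.exp_mul_I]
  simp [wedge, complexify, unitVec]

theorem pairwise_wedge_unitVec_ne_zero {ι : Type*} {d : ℕ} (hd : d ≠ 0) (α : ℝ) {β : ι → ℝ}
    (hinj : Function.Injective β) (hβ : ∀ i, β i ∈ Set.Ico 0 (d * Real.pi)) :
    Pairwise fun i j => wedge (unitVec ((α + β i) / d)) (unitVec ((α + β j) / d)) ≠ 0 := by
  have hd0 : (0 : ℝ) < d := Nat.cast_pos.2 (Nat.pos_of_ne_zero hd)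
  intro i j hij h
  rw [wedge_unitVec, ← sub_div, add_sub_add_left_eq_sub, Real.sin_eq_zero_iff_of_lt_of_lt,
    div_eq_zero_iff, or_iff_left hd0.ne', sub_eq_zero] at h
  · exact hij (hinj h.symm)
  · rw [lt_div_iff₀ hd0]
    linarith [(hβ i).2, (hβ j).1]
  · rw [div_lt_iff₀ hd0]
    linarith [(hβ i).1, (hβ j).2]

theorem wedgeContraction_map_sum_linearForm_unitVec_pow {d : ℕ} (hd : d ≠ 0) {ι : Type*} [Fintype ι]
    (α : ℝ) (a β : ι → ℝ) :
    wedgeContraction d (-Complex.I, 1)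
        ((∑ i, a i • linearForm (unitVec ((α + β i) / d)) ^ d).map (algebraMap ℝ ℂ)) =
      Complex.exp (α * Complex.I) *
        (d.factorial * ∑ i, a i * Complex.exp (β i * Complex.I)) := by
  simp only [map_sum, map_ofReal_smul_linearForm_pow, map_smul, wedgeContraction_linearForm_pow,
    wedge_complexify_unitVec, Finset.mul_sum, smul_eq_mul]
  refine Finset.sum_congr rfl fun i _ => ?_
  have hexp : Complex.exp (((α + β i) / d : ℝ) * Complex.I) ^ d =
      Complex.exp (α * Complex.I) * Complex.exp (β i * Complex.I) := by
    rw [← Complex.exp_nat_mul, ← Complex.exp_add]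
    congr 1
    push_cast
    field_simp
  rw [hexp]
  ring

theorem exists_sum_mul_sin_eq_zero {d : ℕ} (hd : d ≠ 0) (F : MvPolynomial (Fin 2) ℝ)
    {ι : Type*} [Fintype ι] : ∃ α : ℝ, ∀ a β : ι → ℝ,
      F = ∑ i, a i • linearForm (unitVec ((α + β i) / d)) ^ d → ∑ i, a i * Real.sin (β i) = 0 := by
  -- A power at angle `(α + β) / d` pairs with `(∂x + i∂y) ^ d` to `d! exp (i (α + β))`, so taking
  -- for `α` the argument of the pairing of `F` leaves the real number `‖z‖` after division.
  obtain ⟨z, hz⟩ : ∃ z, wedgeContraction d (-Complex.I, 1) (F.map (algebraMap ℝ ℂ)) = z := ⟨_, rfl⟩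
  refine ⟨z.arg, fun a β hF => ?_⟩
  have hpolar : Complex.exp (z.arg * Complex.I) * ‖z‖ = Complex.exp (z.arg * Complex.I) *
      (d.factorial * ∑ i, a i * Complex.exp (β i * Complex.I)) := by
    rw [← wedgeContraction_map_sum_linearForm_unitVec_pow hd, ← hF, hz, mul_comm,
      Complex.norm_mul_exp_arg_mul_I]
  have him := congrArg Complex.im (mul_left_cancel₀ (Complex.exp_ne_zero _) hpolar)
  simpa [Complex.exp_ofReal_mul_I_im, Nat.factorial_ne_zero] using him.symm

theorem isPowerSum_of_isHomogeneous {d : ℕ} (hd : d ≠ 0) {F : MvPolynomial (Fin 2) ℝ}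
    (hF : F.IsHomogeneous d) : IsPowerSum d d F := by
  let β : Fin (d + 1) → ℝ := Fin.cons (Real.pi / 2) fun j => j * Real.pi
  have hβinj : Function.Injective β := by
    refine Fin.cons_injective_iff.2 ⟨?_, fun i j hij => ?_⟩
    · rintro ⟨j, hj⟩
      have hsin := congrArg Real.sin hj
      simp [Real.sin_nat_mul_pi] at hsin
    · simpa [Real.pi_ne_zero, Fin.val_inj] using hij
  have hβ : ∀ i, β i ∈ Set.Ico 0 (d * Real.pi) := by
    have hd1 : (1 : ℝ) ≤ d := Nat.one_le_cast.2 (Nat.one_le_iff_ne_zero.2 hd)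
    refine Fin.forall_iff_succ.2 ⟨⟨Real.pi_div_two_pos.le, ?_⟩, fun j => ⟨?_, ?_⟩⟩
    · exact (half_lt_self Real.pi_pos).trans_le (le_mul_of_one_le_left Real.pi_pos.le hd1)
    · exact mul_nonneg j.val.cast_nonneg Real.pi_pos.le
    · exact mul_lt_mul_of_pos_right (Nat.cast_lt.2 j.2) Real.pi_pos
  obtain ⟨α, hα⟩ := exists_sum_mul_sin_eq_zero hd F (ι := Fin (d + 1))
  obtain ⟨a, ha⟩ := exists_eq_sum_smul_linearForm_pow (Fintype.card_fin _)
    (fun _ => unitVec_ne_zero _) (pairwise_wedge_unitVec_ne_zero hd α hβinj hβ) hF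
  have ha0 : a 0 = 0 := by
    have hsin := hα a β ha
    simpa [β, Fin.sum_univ_succ, Real.sin_nat_mul_pi] using hsin
  refine ⟨fun j => a j.succ, fun j => unitVec ((α + β j.succ) / d), ?_⟩
  rw [ha, Fin.sum_univ_succ, ha0, zero_smul, zero_add]

end HomogeneousForms

section RankGap

variable {d : ℕ} {F : MvPolynomial (Fin 2) ℝ}

theorem powerRank_eq_iff_splitsDistinct (hd : 3 ≤ d) (hF : F.IsHomogeneous d)
    (h : IsPowerSum d 2 (F.map (algebraMap ℝ ℂ))) : powerRank d F = d ↔ SplitsDistinct d F := by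
  have hd0 : d ≠ 0 := by omega
  have hdF := isPowerSum_of_isHomogeneous hd0 hF
  obtain hreal | hconj := isPowerSum_two_or_isConjugatePowerSum hd h
  · have hle := hreal.powerRank_le
    exact iff_of_false (by omega) (hreal.two_not_splitsDistinct hd)
  · have hle := hconj.le_of_isPowerSum hdF.isPowerSum_powerRank
    exact iff_of_true (hdF.powerRank_le.antisymm hle) (hconj.splitsDistinct hd0)

theorem powerRank_sub_eq_iff (hd : 3 ≤ d) (hF : F.IsHomogeneous d) :
    powerRank d F - powerRank d (F.map (algebraMap ℝ ℂ)) = d - 2 ↔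
      powerRank d (F.map (algebraMap ℝ ℂ)) = 2 ∧ powerRank d F = d := by
  refine ⟨fun hgap => ?_, fun ⟨hr, hR⟩ => by rw [hr, hR]⟩
  have hd0 : d ≠ 0 := by omega
  have hdF := isPowerSum_of_isHomogeneous hd0 hF
  have hR := hdF.powerRank_le
  have hr : ¬ powerRank d (F.map (algebraMap ℝ ℂ)) ≤ 1 := fun hr => by
    have hRr := ((hdF.map _).isPowerSum_powerRank.of_map_of_le_one hd0 hr).powerRank_le
    omega
  omega

theorem splitsDistinct_iff_exists_rlin : SplitsDistinct d F ↔
    ∃ L : Fin d → ℝ × ℝ, F = ∏ i, rlin (L i) ∧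
      ∀ i j, i ≠ j → (L i).1 * (L j).2 ≠ (L i).2 * (L j).1 := by
  simp only [SplitsDistinct, Pairwise, wedge, sub_ne_zero]
  rfl

end RankGap

theorem maximal_real_complex_rank_gap_general (d : ℕ) (hd : 3 ≤ d)
    (F : MvPolynomial (Fin 2) ℝ) (hF : F.IsHomogeneous d) :
    (realWaringRank d F - waringRank d (F.map (algebraMap ℝ ℂ)) = d - 2 ↔
      (waringRank d (F.map (algebraMap ℝ ℂ)) = 2 ∧ realWaringRank d F = d)) ∧
    ((waringRank d (F.map (algebraMap ℝ ℂ)) = 2 ∧ realWaringRank d F = d) ↔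
      (waringRank d (F.map (algebraMap ℝ ℂ)) = 2 ∧
        ∃ L : Fin d → ℝ × ℝ, F = ∏ i, rlin (L i) ∧
          ∀ i j, i ≠ j → (L i).1 * (L j).2 ≠ (L i).2 * (L j).1)) := by
  rw [realWaringRank_eq_powerRank, waringRank_eq_powerRank, ← splitsDistinct_iff_exists_rlin]
  refine ⟨powerRank_sub_eq_iff hd hF, and_congr_right fun hr => ?_⟩
  have hdF := isPowerSum_of_isHomogeneous (by omega) hF
  have h2 := (hdF.map (algebraMap ℝ ℂ)).isPowerSum_powerRank
  exact powerRank_eq_iff_splitsDistinct hd hF (by rwa [hr] at h2)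

theorem maximal_real_complex_rank_gap (d : ℕ) (hd : 4 ≤ d)
    (F : MvPolynomial (Fin 2) ℝ) (hF : F.IsHomogeneous d) :
    (realWaringRank d F - waringRank d (F.map (algebraMap ℝ ℂ)) = d - 2 ↔
      (waringRank d (F.map (algebraMap ℝ ℂ)) = 2 ∧ realWaringRank d F = d)) ∧
    ((waringRank d (F.map (algebraMap ℝ ℂ)) = 2 ∧ realWaringRank d F = d) ↔
      (waringRank d (F.map (algebraMap ℝ ℂ)) = 2 ∧
        ∃ L : Fin d → ℝ × ℝ, F = ∏ i, rlin (L i) ∧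
          ∀ i j, i ≠ j → (L i).1 * (L j).2 ≠ (L i).2 * (L j).1)) :=
  maximal_real_complex_rank_gap_general d (by omega) F hF
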